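/- arXiv:2602.11486 — 2 statements merged into one kernel-verified Lean document; each statement's English description precedes it below -/
import Mathlib

section
/- Fix constants 0 < δ ≤ Δ and an integer k ≥ 3. For every Alice value density v_A there exists a deterministic Alice strategy S_A for the repeated k-cut game, independent of the parameters α and c below, such that: for every α < 1 and every c > 0 there exist C > 0 and T₀ ∈ ℕ with the property that for every Bob value density v_B, every deterministic Bob strategy that guarantees regret at most c·T'^α for every horizon T', and every horizon T ≥ T₀, Alice's Stackelberg regret under S_A over horizon T is at most C·T·k^{3/4}/log T. -/
open MeasureTheory Set

noncomputable section

attribute [local instance] Classical.propDecidable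

/-- A value density: measurable, bounded in `[δ, Δ]` on `[0,1]`, integrating to 1 on `[0,1]`. -/
def IsValueDensity (δ Δ : ℝ) (v : ℝ → ℝ) : Prop :=
  Measurable v ∧ (∀ x ∈ Set.Icc (0:ℝ) 1, v x ∈ Set.Icc δ Δ) ∧
    (∫ x in Set.Icc (0:ℝ) 1, v x) = 1

/-- The value of a piece `S` under density `v`. -/
def pieceVal (v : ℝ → ℝ) (S : Set ℝ) : ℝ := ∫ x in S, v x

/-- Extended cut points: `0, c 0, …, c (k-1), 1`. -/
def extCuts (k : ℕ) (c : Fin k → ℝ) : ℕ → ℝ := fun i =>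
  if i = 0 then 0 else if h : i - 1 < k then c ⟨i - 1, h⟩ else 1

/-- A valid vector of `k` cut points: nondecreasing, within `[0,1]`. -/
def ValidCuts (k : ℕ) (c : Fin k → ℝ) : Prop :=
  Monotone c ∧ ∀ i, c i ∈ Set.Icc (0:ℝ) 1

/-- The two pieces of the alternating partition induced by cuts `c`:
`true` gives the union of even-indexed intervals, `false` the odd-indexed ones. -/
def altPiece (k : ℕ) (c : Fin k → ℝ) (b : Bool) : Set ℝ :=
  ⋃ i ∈ Finset.range (k + 1),
    if decide (i % 2 = 0) = b then Set.Icc (extCuts k c i) (extCuts k c (i + 1)) else ∅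

/-- Alice's Stackelberg value with `k` cuts: max of `V_A(Z_A)` over alternating partitions
`(Z_A, Z_B)` induced by `k` cut points with `V_B(Z_B) ≥ 1/2`. -/
def stackelbergValue (k : ℕ) (vA vB : ℝ → ℝ) : ℝ :=
  sSup { u : ℝ | ∃ (c : Fin k → ℝ) (b : Bool), ValidCuts k c ∧
    1 / 2 ≤ pieceVal vB (altPiece k c (!b)) ∧ u = pieceVal vA (altPiece k c b) }

/-- A history of play: the list of (Alice's cuts, Bob's choice) in past rounds. -/
abbrev Hist (k : ℕ) := List ((Fin k → ℝ) × Bool)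

/-- Alice's deterministic strategy: horizon and history ↦ next cut vector. -/
abbrev AliceStrategy (k : ℕ) := ℕ → Hist k → (Fin k → ℝ)

/-- Bob's deterministic strategy: horizon, history, and Alice's current cuts ↦ choice. -/
abbrev BobStrategy (k : ℕ) := ℕ → Hist k → (Fin k → ℝ) → Bool

/-- The history of play after `t` rounds. -/
def playHist (k : ℕ) (SA : AliceStrategy k) (SB : BobStrategy k) (T : ℕ) : ℕ → Hist k
  | 0 => []
  | t + 1 =>
      let h := playHist k SA SB T t
      let cuts := SA T h
      h ++ [(cuts, SB T h cuts)]

/-- Alice's cuts in round `t` (0-indexed). -/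
def roundCuts (k : ℕ) (SA : AliceStrategy k) (SB : BobStrategy k) (T t : ℕ) : Fin k → ℝ :=
  SA T (playHist k SA SB T t)

/-- Bob's choice in round `t` (0-indexed). -/
def roundChoice (k : ℕ) (SA : AliceStrategy k) (SB : BobStrategy k) (T t : ℕ) : Bool :=
  SB T (playHist k SA SB T t) (roundCuts k SA SB T t)

/-- Alice's Stackelberg regret over horizon `T`: in each round she receives the value of
the piece Bob did not choose. -/
def aliceRegret (k : ℕ) (vA vB : ℝ → ℝ) (SA : AliceStrategy k) (SB : BobStrategy k)
    (T : ℕ) : ℝ :=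
  ∑ t ∈ Finset.range T,
    (stackelbergValue k vA vB -
      pieceVal vA (altPiece k (roundCuts k SA SB T t) (!(roundChoice k SA SB T t))))

/-- Bob's regret over horizon `T` relative to always choosing his preferred piece. -/
def bobRegret (k : ℕ) (vB : ℝ → ℝ) (SA : AliceStrategy k) (SB : BobStrategy k) (T : ℕ) : ℝ :=
  ∑ t ∈ Finset.range T,
    (max (pieceVal vB (altPiece k (roundCuts k SA SB T t) true))
        (pieceVal vB (altPiece k (roundCuts k SA SB T t) false)) -
      pieceVal vB (altPiece k (roundCuts k SA SB T t) (roundChoice k SA SB T t)))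

/-- Bob's strategy guarantees regret at most `R T` against every Alice strategy and horizon. -/
def BobGuarantees (k : ℕ) (vB : ℝ → ℝ) (SB : BobStrategy k) (R : ℕ → ℝ) : Prop :=
  ∀ (SA : AliceStrategy k) (T : ℕ), bobRegret k vB SA SB T ≤ R T

/-- The myopic Bob: chooses the piece of larger `V_B`-value, breaking ties towards
the piece of smaller `V_A`-value. -/
def myopicBob (k : ℕ) (vA vB : ℝ → ℝ) : BobStrategy k := fun _ _ c =>
  if pieceVal vB (altPiece k c false) < pieceVal vB (altPiece k c true) then true
  else if pieceVal vB (altPiece k c true) < pieceVal vB (altPiece k c false) then false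
  else if pieceVal vA (altPiece k c true) ≤ pieceVal vA (altPiece k c false) then true
  else false

/-- Alice's strategy always produces valid cut vectors. -/
def AliceValid (k : ℕ) (SA : AliceStrategy k) : Prop := ∀ T h, ValidCuts k (SA T h)

/-- Cumulative value. -/
def cumVal (v : ℝ → ℝ) (t : ℝ) : ℝ := ∫ x in (0:ℝ)..t, v x

/-- Value of the piece `b`, as a sum of differences of a cumulative function. -/
def altSum (k : ℕ) (G : ℝ → ℝ) (E : ℕ → ℝ) (b : Bool) : ℝ :=
  ∑ i ∈ Finset.range (k + 1), if decide (i % 2 = 0) = b then G (E (i + 1)) - G (E i) else 0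

lemma density_intervalIntegrable {δ Δ : ℝ} (hδ : 0 < δ) {v : ℝ → ℝ} (hv : IsValueDensity δ Δ v)
    {a b : ℝ} (ha : 0 ≤ a) (hab : a ≤ b) (hb : b ≤ 1) : IntervalIntegrable v volume a b := by
  rw [intervalIntegrable_iff_integrableOn_Icc_of_le hab]
  refine Measure.integrableOn_of_bounded (M := Δ) (by simp) hv.1.aestronglyMeasurable ?_
  refine (ae_restrict_iff' measurableSet_Icc).2 (Filter.Eventually.of_forall fun x hx => ?_)
  have := hv.2.1 x ⟨ha.trans hx.1, hx.2.trans hb⟩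
  rw [Real.norm_eq_abs, abs_of_nonneg (hδ.le.trans this.1)]
  exact this.2

lemma cumVal_sub {δ Δ : ℝ} (hδ : 0 < δ) {v : ℝ → ℝ} (hv : IsValueDensity δ Δ v)
    {a b : ℝ} (ha : 0 ≤ a) (hab : a ≤ b) (hb : b ≤ 1) :
    cumVal v b - cumVal v a = ∫ x in a..b, v x := by
  unfold cumVal
  rw [intervalIntegral.integral_interval_sub_left]
  · exact density_intervalIntegrable hδ hv le_rfl (ha.trans hab) hb
  · exact density_intervalIntegrable hδ hv le_rfl ha (hab.trans hb)

lemma cumVal_lower {δ Δ : ℝ} (hδ : 0 < δ) {v : ℝ → ℝ} (hv : IsValueDensity δ Δ v)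
    {a b : ℝ} (ha : 0 ≤ a) (hab : a ≤ b) (hb : b ≤ 1) :
    δ * (b - a) ≤ cumVal v b - cumVal v a := by
  rw [cumVal_sub hδ hv ha hab hb]
  have := intervalIntegral.integral_mono_on (f := fun _ => δ) hab (by simp)
    (density_intervalIntegrable hδ hv ha hab hb)
    (fun x hx => (hv.2.1 x ⟨ha.trans hx.1, hx.2.trans hb⟩).1)
  simpa [mul_comm] using this

lemma cumVal_upper {δ Δ : ℝ} (hδ : 0 < δ) {v : ℝ → ℝ} (hv : IsValueDensity δ Δ v)
    {a b : ℝ} (ha : 0 ≤ a) (hab : a ≤ b) (hb : b ≤ 1) :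
    cumVal v b - cumVal v a ≤ Δ * (b - a) := by
  rw [cumVal_sub hδ hv ha hab hb]
  have := intervalIntegral.integral_mono_on (g := fun _ => Δ) hab
    (density_intervalIntegrable hδ hv ha hab hb) (by simp)
    (fun x hx => (hv.2.1 x ⟨ha.trans hx.1, hx.2.trans hb⟩).2)
  simpa [mul_comm] using this

lemma extCuts_mem {k : ℕ} {c : Fin k → ℝ} (hc : ValidCuts k c) (i : ℕ) :
    extCuts k c i ∈ Set.Icc (0:ℝ) 1 := by
  unfold extCuts
  split_ifs
  · simp
  · exact hc.2 _
  · simp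

lemma extCuts_mono {k : ℕ} {c : Fin k → ℝ} (hc : ValidCuts k c) : Monotone (extCuts k c) := by
  refine monotone_nat_of_le_succ fun i => ?_
  by_cases hi : i = 0
  · subst hi
    have := (extCuts_mem hc (0+1)).1
    simpa [extCuts] using this
  · by_cases h : i < k
    · have h1 : i - 1 < k := by omega
      simp only [extCuts, hi, h, h1, if_false, dif_pos, Nat.succ_ne_zero, Nat.add_sub_cancel]
      apply hc.1
      simp
    · have h2 : extCuts k c (i+1) = 1 := by simp [extCuts, h]
      rw [h2]
      exact (extCuts_mem hc i).2

lemma extCuts_zero (k : ℕ) (c : Fin k → ℝ) : extCuts k c 0 = 0 := by simp [extCuts]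

lemma extCuts_last (k : ℕ) (c : Fin k → ℝ) : extCuts k c (k+1) = 1 := by simp [extCuts]

/-- build cuts from an extended sequence -/
lemma extCuts_of (k : ℕ) (x : ℕ → ℝ) (h0 : x 0 = 0) (h1 : x (k+1) = 1) (i : ℕ) (hi : i ≤ k + 1) :
    extCuts k (fun j => x (j + 1)) i = x i := by
  unfold extCuts
  split_ifs with h h'
  · rw [h, h0]
  · simp only
    congr 1
    omega
  · have : i = k + 1 := by omega
    rw [this, h1]

lemma pieceVal_altPiece {δ Δ : ℝ} (hδ : 0 < δ) {v : ℝ → ℝ} (hv : IsValueDensity δ Δ v)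
    {k : ℕ} {c : Fin k → ℝ} (hc : ValidCuts k c) (b : Bool) :
    pieceVal v (altPiece k c b) = altSum k (cumVal v) (extCuts k c) b := by
  unfold pieceVal altPiece altSum
  have hmono := extCuts_mono hc
  have h1 : (⋃ i ∈ Finset.range (k + 1),
      if decide (i % 2 = 0) = b then Set.Icc (extCuts k c i) (extCuts k c (i + 1)) else ∅)
      =ᵐ[volume] (⋃ i ∈ Finset.range (k + 1),
      if decide (i % 2 = 0) = b then Set.Ioc (extCuts k c i) (extCuts k c (i + 1)) else ∅) := by
    refine Filter.EventuallyEq.countable_iUnion fun i => Filter.EventuallyEq.countable_iUnion fun _ => ?_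
    split_ifs
    · exact Ioc_ae_eq_Icc.symm
    · rfl
  rw [setIntegral_congr_set h1, integral_biUnion_finset]
  · refine Finset.sum_congr rfl fun i _ => ?_
    split_ifs
    · rw [cumVal_sub hδ hv (extCuts_mem hc i).1 (hmono (Nat.le_succ i)) (extCuts_mem hc _).2,
        intervalIntegral.integral_of_le (hmono (Nat.le_succ i))]
    · simp
  · intro i _
    split_ifs
    · exact measurableSet_Ioc
    · simp
  · intro i _ j _ hij
    have := hmono.pairwise_disjoint_on_Ioc_succ hij
    simp only [Function.onFun, Order.succ_eq_add_one] at this ⊢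
    split_ifs <;> simp [this]
  · intro i _
    split_ifs
    · rw [← intervalIntegrable_iff_integrableOn_Ioc_of_le (hmono (Nat.le_succ i))]
      exact density_intervalIntegrable hδ hv (extCuts_mem hc i).1 (hmono (Nat.le_succ i)) (extCuts_mem hc _).2
    · simp

lemma altSum_add (k : ℕ) (G : ℝ → ℝ) (E : ℕ → ℝ) :
    altSum k G E true + altSum k G E false = G (E (k+1)) - G (E 0) := by
  unfold altSum
  rw [← Finset.sum_add_distrib, ← Finset.sum_range_sub (fun i => G (E i))]
  refine Finset.sum_congr rfl fun i _ => ?_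
  by_cases h : i % 2 = 0 <;> simp [h]

lemma pieceVal_add {δ Δ : ℝ} (hδ : 0 < δ) {v : ℝ → ℝ} (hv : IsValueDensity δ Δ v)
    {k : ℕ} {c : Fin k → ℝ} (hc : ValidCuts k c) (b : Bool) :
    pieceVal v (altPiece k c b) + pieceVal v (altPiece k c (!b)) = 1 := by
  have : pieceVal v (altPiece k c true) + pieceVal v (altPiece k c false) = 1 := by
    rw [pieceVal_altPiece hδ hv hc, pieceVal_altPiece hδ hv hc, altSum_add, extCuts_zero,
      extCuts_last, cumVal_sub hδ hv le_rfl zero_le_one le_rfl,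
      intervalIntegral.integral_of_le zero_le_one, ← integral_Icc_eq_integral_Ioc]
    exact hv.2.2
  cases b
  · rw [add_comm]; simpa using this
  · simpa using this

lemma pieceVal_nonneg {δ Δ : ℝ} (hδ : 0 < δ) {v : ℝ → ℝ} (hv : IsValueDensity δ Δ v)
    {k : ℕ} {c : Fin k → ℝ} (hc : ValidCuts k c) (b : Bool) :
    0 ≤ pieceVal v (altPiece k c b) := by
  rw [pieceVal_altPiece hδ hv hc]
  refine Finset.sum_nonneg fun i _ => ?_
  have hm := extCuts_mono hc (Nat.le_succ i)
  split_ifs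
  · refine le_trans ?_ (cumVal_lower hδ hv (extCuts_mem hc i).1 hm (extCuts_mem hc _).2)
    exact mul_nonneg hδ.le (sub_nonneg.2 hm)
  · exact le_rfl

/-- Some interval of a piece of large value is long. -/
lemma exists_long {δ Δ : ℝ} (hδ : 0 < δ) {v : ℝ → ℝ} (hv : IsValueDensity δ Δ v)
    {k : ℕ} {c : Fin k → ℝ} (hc : ValidCuts k c) (b : Bool) (s : ℝ) (hs : 0 ≤ s) (hΔ : 0 ≤ Δ)
    (hu : (k + 1) * (Δ * s) < pieceVal v (altPiece k c b)) :
    ∃ j, j ≤ k ∧ decide (j % 2 = 0) = b ∧ s ≤ extCuts k c (j + 1) - extCuts k c j := by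
  by_contra! hcon
  apply hu.not_ge
  rw [pieceVal_altPiece hδ hv hc]
  have := Finset.sum_le_card_nsmul (Finset.range (k+1)) (fun i => if decide (i % 2 = 0) = b then
    cumVal v (extCuts k c (i + 1)) - cumVal v (extCuts k c i) else 0) (Δ * s) (by
      intro i hi
      have hi' : i ≤ k := by simpa [Nat.lt_succ_iff] using hi
      have hm := extCuts_mono hc (Nat.le_succ i)
      split_ifs with h
      · refine (cumVal_upper hδ hv (extCuts_mem hc i).1 hm (extCuts_mem hc _).2).trans ?_
        exact mul_le_mul_of_nonneg_left (hcon i hi' h).le hΔ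
      · positivity)
  simpa [altSum] using this

/-- Shrinking one interval of the piece `b`. -/
lemma exists_shrink {δ Δ : ℝ} (hδ : 0 < δ) {k : ℕ} (hk : 1 ≤ k) {c : Fin k → ℝ}
    (hc : ValidCuts k c) (b : Bool) (s : ℝ) (hs : 0 ≤ s) (j : ℕ) (hj : j ≤ k)
    (hjb : decide (j % 2 = 0) = b) (hlen : s ≤ extCuts k c (j + 1) - extCuts k c j) :
    ∃ c' : Fin k → ℝ, ValidCuts k c' ∧ ∀ v, IsValueDensity δ Δ v →
      pieceVal v (altPiece k c b) - Δ * s ≤ pieceVal v (altPiece k c' b) ∧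
      pieceVal v (altPiece k c' b) ≤ pieceVal v (altPiece k c b) - δ * s := by
  set E := extCuts k c with hE
  have hm : Monotone E := extCuts_mono hc
  -- a general shrink
  obtain ⟨p, w, hp1, hpk, hpj, hlo, hhi, hval⟩ : ∃ (p : ℕ) (w : ℝ), 1 ≤ p ∧ p ≤ k ∧
      (p = j ∨ p = j + 1) ∧ E (p - 1) ≤ w ∧ w ≤ E (p + 1) ∧
      ((p = j + 1 ∧ w = E (j+1) - s) ∨ (p = j ∧ w = E j + s)) := by
    by_cases h : j + 1 ≤ k
    · refine ⟨j + 1, E (j+1) - s, by omega, h, Or.inr rfl, ?_, ?_, Or.inl ⟨rfl, rfl⟩⟩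
      · simp only [Nat.add_sub_cancel]; linarith
      · have := hm (Nat.le_succ (j+1)); simp only [Nat.succ_eq_add_one] at this; linarith
    · refine ⟨j, E j + s, by omega, hj, Or.inl rfl, ?_, ?_, Or.inr ⟨rfl, rfl⟩⟩
      · have := hm (Nat.sub_le j 1); linarith
      · linarith
  set x : ℕ → ℝ := Function.update E p w with hx
  have hxm : Monotone x := by
    refine monotone_nat_of_le_succ fun i => ?_
    have := hm (Nat.le_succ i)
    simp only [hx, Function.update_apply]
    split_ifs with h1 h2 h2
    · omega
    · subst h1; exact hhi
    · subst h2; simpa using hlo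
    · exact this
  have hx0 : x 0 = 0 := by
    rw [hx, Function.update_of_ne (by omega)]; exact extCuts_zero k c
  have hx1 : x (k+1) = 1 := by
    rw [hx, Function.update_of_ne (by omega)]; exact extCuts_last k c
  have hext := extCuts_of k x hx0 hx1
  have hvc : ValidCuts k (fun j : Fin k => x (j + 1)) := by
    refine ⟨fun a b hab => hxm (by simpa using hab), fun i => ⟨?_, ?_⟩⟩
    · rw [← hx0]; exact hxm (by omega)
    · rw [← hx1]; exact hxm (by omega)
  refine ⟨_, hvc, fun v hv => ?_⟩
  rw [pieceVal_altPiece hδ hv hc, pieceVal_altPiece hδ hv hvc]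
  have key : altSum k (cumVal v) (extCuts k fun j : Fin k => x (j + 1)) b - altSum k (cumVal v) E b
      = (cumVal v (x (j+1)) - cumVal v (x j)) - (cumVal v (E (j+1)) - cumVal v (E j)) := by
    unfold altSum
    rw [← Finset.sum_sub_distrib, Finset.sum_eq_single j]
    · rw [if_pos hjb, if_pos hjb, hext _ (by omega), hext _ (by omega)]
    · intro i hi hij
      have hik : i < k + 1 := by simpa using hi
      split_ifs with hib
      · have hpar : (i % 2 = 0) ↔ (j % 2 = 0) := by
          rw [← hjb] at hib; simpa using hib
        rw [hext _ (by omega), hext _ (by omega), hx, Function.update_of_ne (by omega),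
          Function.update_of_ne (by omega)]
        simp
      · simp
    · intro h; simp at h; omega
  have hEj := extCuts_mem hc j
  have hEj1 := extCuts_mem hc (j+1)
  rw [← hE] at hEj hEj1
  rcases hval with ⟨rfl, rfl⟩ | ⟨rfl, rfl⟩
  · have e1 : x (j+1) = E (j+1) - s := by simp [hx]
    have e2 : x j = E j := by rw [hx, Function.update_of_ne (by omega)]
    rw [e1, e2] at key
    have l := cumVal_lower hδ hv (a := E (j+1) - s) (b := E (j+1)) (by linarith [hEj.1]) (by linarith) hEj1.2
    have u := cumVal_upper hδ hv (a := E (j+1) - s) (b := E (j+1)) (by linarith [hEj.1]) (by linarith) hEj1.2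
    ring_nf at l u key ⊢
    constructor <;> linarith
  · have e1 : x p = E p + s := by simp [hx]
    have e2 : x (p+1) = E (p+1) := by rw [hx, Function.update_of_ne (by omega)]
    rw [e1, e2] at key
    have l := cumVal_lower hδ hv (a := E p) (b := E p + s) hEj.1 (by linarith) (by linarith [hEj1.2])
    have u := cumVal_upper hδ hv (a := E p) (b := E p + s) hEj.1 (by linarith) (by linarith [hEj1.2])
    ring_nf at l u key ⊢
    constructor <;> linarith

/-- Grid candidates. -/
def gridCands (k n : ℕ) : Finset ((Fin k → ℝ) × Bool) :=
  ((Finset.univ.image fun f : Fin k → Fin (n+1) => fun i => ((f i : ℕ) : ℝ) / n).filter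
    (ValidCuts k)) ×ˢ Finset.univ

lemma gridCands_card (k n : ℕ) : (gridCands k n).card ≤ 2 * (n+1)^k := by
  unfold gridCands
  rw [Finset.card_product]
  have h1 := Finset.card_filter_le (Finset.univ.image fun f : Fin k → Fin (n+1) =>
    fun i => ((f i : ℕ) : ℝ) / n) (ValidCuts k)
  have h2 : (Finset.univ.image fun f : Fin k → Fin (n+1) =>
    fun i => ((f i : ℕ) : ℝ) / n).card ≤ (n+1)^k := by
    refine Finset.card_image_le.trans ?_
    simp
  have h3 : (Finset.univ : Finset Bool).card = 2 := by simp
  rw [h3]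
  have := h1.trans h2
  omega

lemma gridCands_valid {k n : ℕ} {p : (Fin k → ℝ) × Bool} (hp : p ∈ gridCands k n) :
    ValidCuts k p.1 := by
  unfold gridCands at hp
  rw [Finset.mem_product] at hp
  exact (Finset.mem_filter.1 hp.1).2

/-- Rounding to the grid. -/
lemma exists_round {δ Δ : ℝ} (hδ : 0 < δ) (hΔ : 0 ≤ Δ) {k n : ℕ} (hn : 1 ≤ n) {c : Fin k → ℝ}
    (hc : ValidCuts k c) (b : Bool) :
    ∃ c' : Fin k → ℝ, (c', b) ∈ gridCands k n ∧ ∀ v, IsValueDensity δ Δ v →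
      |pieceVal v (altPiece k c' b) - pieceVal v (altPiece k c b)| ≤ (k+1) * (2 * (Δ / n)) := by
  have hn0 : (0:ℝ) < n := by exact_mod_cast hn
  set r : ℝ → ℝ := fun x => (⌊x * n⌋₊ : ℝ) / n with hr
  have hrm : Monotone r := by
    intro a b hab
    simp only [hr]
    gcongr
  have hr0 : r 0 = 0 := by simp [hr]
  have hr1 : r 1 = 1 := by simp [hr, hn0.ne']
  have hle : ∀ x, 0 ≤ x → r x ≤ x := by
    intro x hx
    simp only [hr]
    rw [div_le_iff₀ hn0]
    exact Nat.floor_le (by positivity)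
  have hge : ∀ x, x - r x ≤ 1 / n := by
    intro x
    have := Nat.lt_floor_add_one (x * n)
    simp only [hr]
    rw [sub_le_iff_le_add, ← add_div, le_div_iff₀ hn0]
    linarith
  set c' : Fin k → ℝ := fun i => r (c i) with hc'
  have hvc : ValidCuts k c' := by
    refine ⟨fun a b hab => hrm (hc.1 hab), fun i => ⟨?_, ?_⟩⟩
    · rw [← hr0]; exact hrm (hc.2 i).1
    · rw [← hr1]; exact hrm (hc.2 i).2
  have hext : ∀ i, extCuts k c' i = r (extCuts k c i) := by
    intro i
    unfold extCuts
    split_ifs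
    · exact hr0.symm
    · rfl
    · exact hr1.symm
  refine ⟨c', ?_, fun v hv => ?_⟩
  · unfold gridCands
    rw [Finset.mem_product]
    refine ⟨Finset.mem_filter.2 ⟨Finset.mem_image.2 ⟨fun i => ⟨⌊c i * n⌋₊, ?_⟩, Finset.mem_univ _, ?_⟩, hvc⟩,
      Finset.mem_univ _⟩
    · rw [Nat.lt_succ_iff]
      apply Nat.floor_le_of_le
      have := (hc.2 i).2
      nlinarith
    · rfl
  · rw [pieceVal_altPiece hδ hv hc, pieceVal_altPiece hδ hv hvc]
    have hd : ∀ i, |cumVal v (extCuts k c' i) - cumVal v (extCuts k c i)| ≤ Δ / n := by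
      intro i
      have hm := extCuts_mem hc i
      rw [hext i]
      have h1 := hle _ hm.1
      have h0 : 0 ≤ r (extCuts k c i) := by rw [← hr0]; exact hrm hm.1
      have hl := cumVal_lower hδ hv h0 h1 hm.2
      have hu := cumVal_upper hδ hv h0 h1 hm.2
      have h2 : Δ * (extCuts k c i - r (extCuts k c i)) ≤ Δ * (1 / n) :=
        mul_le_mul_of_nonneg_left (hge _) hΔ
      have h3 : 0 ≤ δ * (extCuts k c i - r (extCuts k c i)) :=
        mul_nonneg hδ.le (sub_nonneg.2 h1)
      rw [abs_sub_comm, abs_of_nonneg (h3.trans hl)]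
      calc _ ≤ _ := hu
        _ ≤ _ := h2
        _ = _ := by ring
    unfold altSum
    rw [← Finset.sum_sub_distrib]
    refine (Finset.abs_sum_le_sum_abs _ _).trans ?_
    have hdn : 0 ≤ Δ / n := by positivity
    have := Finset.sum_le_card_nsmul (Finset.range (k+1)) (fun i =>
      |(if decide (i % 2 = 0) = b then cumVal v (extCuts k c' (i + 1)) - cumVal v (extCuts k c' i) else 0) -
       (if decide (i % 2 = 0) = b then cumVal v (extCuts k c (i + 1)) - cumVal v (extCuts k c i) else 0)|)
       (2 * (Δ / n)) (by
        intro i _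
        split_ifs
        · have a1 := abs_le.1 (hd i)
          have a2 := abs_le.1 (hd (i+1))
          rw [abs_le]
          constructor <;> linarith
        · simp; exact hdn)
    simpa using this

/-- Existence of a robust near-optimal grid candidate. -/
lemma exists_good {δ Δ : ℝ} (hδ : 0 < δ) (hδΔ : δ ≤ Δ) {k n : ℕ} (hk : 1 ≤ k) (hn : 1 ≤ n)
    {vA vB : ℝ → ℝ} (hA : IsValueDensity δ Δ vA) (hB : IsValueDensity δ Δ vB)
    {c : Fin k → ℝ} (hc : ValidCuts k c) (b : Bool)
    (hb : 1 / 2 ≤ pieceVal vB (altPiece k c (!b)))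
    (K : ℝ) (hK : K = (k+1) * (Δ * ((2 * (k+1) * Δ + 1) / δ)) + 2 * (k+1) * Δ)
    (hu : K / n < pieceVal vA (altPiece k c b)) :
    ∃ p ∈ gridCands k n, 1 / 2 + 1 / (n:ℝ) ≤ pieceVal vB (altPiece k p.1 (!p.2)) ∧
      pieceVal vA (altPiece k c b) ≤ pieceVal vA (altPiece k p.1 p.2) + K / n := by
  have hΔ : 0 < Δ := hδ.trans_le hδΔ
  have hn0 : (0:ℝ) < n := by exact_mod_cast hn
  set s : ℝ := (2 * (k+1) * Δ + 1) / δ / n with hs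
  have hs0 : 0 ≤ s := by positivity
  have hKs : K / n = (k+1) * (Δ * s) + (k+1) * (2 * (Δ / n)) := by
    rw [hK, hs]; ring
  have hδs : δ * s = (k+1) * (2 * (Δ / n)) + 1 / n := by
    rw [hs]; field_simp
  have hpos : 0 ≤ (k+1) * (2 * (Δ / n)) := by positivity
  obtain ⟨j, hj, hjb, hlen⟩ := exists_long hδ hA hc b s hs0 hΔ.le (by linarith)
  obtain ⟨c1, hc1, h1⟩ := exists_shrink (Δ := Δ) hδ hk hc b s hs0 j hj hjb hlen
  obtain ⟨c2, hc2, h2⟩ := exists_round (Δ := Δ) hδ hΔ.le hn hc1 b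
  refine ⟨_, hc2, ?_, ?_⟩
  · have e1 := (h1 vB hB).2
    have e2 := abs_le.1 (h2 vB hB)
    have e3 := pieceVal_add hδ hB hc b
    have e4 := pieceVal_add hδ hB (gridCands_valid hc2) b
    simp only at e4 ⊢
    linarith
  · have e1 := (h1 vA hA).1
    have e2 := abs_le.1 (h2 vA hA)
    have e3 : 0 ≤ k * (Δ * s) := by positivity
    simp only
    linarith

/-- How often the candidate `p = (c, b)` was refused: Bob took piece `b` facing cuts `c`. -/
def refusals {k : ℕ} (h : Hist k) (p : (Fin k → ℝ) × Bool) : ℕ :=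
  h.countP (fun e => decide (e = p))

lemma refusals_append {k : ℕ} (h : Hist k) (e p : (Fin k → ℝ) × Bool) :
    refusals (h ++ [e]) p = refusals h p + if e = p then 1 else 0 := by
  simp [refusals, List.countP_append, List.countP_cons]

/-- Candidates not yet refused `m` times. -/
def alive {k : ℕ} (P : Finset ((Fin k → ℝ) × Bool)) (m : ℕ) (h : Hist k) :
    Finset ((Fin k → ℝ) × Bool) :=
  P.filter fun p => refusals h p < m

/-- The alive candidate that is best for Alice (or a default). -/
def bestAlive {k : ℕ} (vA : ℝ → ℝ) (P : Finset ((Fin k → ℝ) × Bool)) (m : ℕ) (h : Hist k) :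
    (Fin k → ℝ) × Bool :=
  if hne : (alive P m h).Nonempty then
    (Finset.exists_max_image (alive P m h) (fun p => pieceVal vA (altPiece k p.1 p.2)) hne).choose
  else (fun _ => 0, true)

lemma bestAlive_spec {k : ℕ} (vA : ℝ → ℝ) (P : Finset ((Fin k → ℝ) × Bool)) (m : ℕ) (h : Hist k)
    (hne : (alive P m h).Nonempty) :
    bestAlive vA P m h ∈ alive P m h ∧ ∀ p ∈ alive P m h,
      pieceVal vA (altPiece k p.1 p.2) ≤
        pieceVal vA (altPiece k (bestAlive vA P m h).1 (bestAlive vA P m h).2) := by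
  unfold bestAlive
  rw [dif_pos hne]
  exact (Finset.exists_max_image (alive P m h)
    (fun p => pieceVal vA (altPiece k p.1 p.2)) hne).choose_spec

lemma bestAlive_valid {k : ℕ} (vA : ℝ → ℝ) (n m : ℕ) (h : Hist k) :
    ValidCuts k (bestAlive vA (gridCands k n) m h).1 := by
  by_cases hne : (alive (gridCands k n) m h).Nonempty
  · exact gridCands_valid (Finset.mem_filter.1 (bestAlive_spec vA _ m h hne).1).1
  · unfold bestAlive
    rw [dif_neg hne]
    exact ⟨fun _ _ _ => le_rfl, fun _ => by simp⟩

/-- Grid resolution. -/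
def resol (T : ℕ) : ℕ := ⌈Real.log T⌉₊

/-- Refusal budget per candidate. -/
def budget (k T : ℕ) : ℕ := ⌊(T:ℝ) / ((resol T : ℝ) + 1) ^ (k+1)⌋₊ + 1

/-- Alice's strategy. -/
def descStrategy (k : ℕ) (vA : ℝ → ℝ) : AliceStrategy k := fun T h =>
  (bestAlive vA (gridCands k (resol T)) (budget k T) h).1

lemma descStrategy_valid (k : ℕ) (vA : ℝ → ℝ) : AliceValid k (descStrategy k vA) :=
  fun _ _ => bestAlive_valid _ _ _ _

lemma playHist_succ (k : ℕ) (SA : AliceStrategy k) (SB : BobStrategy k) (T t : ℕ) :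
    playHist k SA SB T (t+1) = playHist k SA SB T t ++
      [(roundCuts k SA SB T t, roundChoice k SA SB T t)] := rfl

/-- Refusing a robust candidate is costly for Bob. -/
lemma refusals_cost {δ Δ : ℝ} (hδ : 0 < δ) {k : ℕ} {vB : ℝ → ℝ} (hB : IsValueDensity δ Δ vB)
    {SA : AliceStrategy k} (hSA : AliceValid k SA) (SB : BobStrategy k) (T : ℕ)
    {g : ℝ} {p : (Fin k → ℝ) × Bool} (hp : ValidCuts k p.1)
    (hg : 1 / 2 + g ≤ pieceVal vB (altPiece k p.1 (!p.2))) {t : ℕ} (ht : t ≤ T) :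
    (refusals (playHist k SA SB T t) p : ℝ) * (2 * g) ≤ bobRegret k vB SA SB T := by
  set f : ℕ → ℝ := fun t => (max (pieceVal vB (altPiece k (roundCuts k SA SB T t) true))
        (pieceVal vB (altPiece k (roundCuts k SA SB T t) false)) -
      pieceVal vB (altPiece k (roundCuts k SA SB T t) (roundChoice k SA SB T t))) with hf
  have hf0 : ∀ t, 0 ≤ f t := by
    intro t
    simp only [hf]
    cases roundChoice k SA SB T t
    · exact sub_nonneg.2 (le_max_right _ _)
    · exact sub_nonneg.2 (le_max_left _ _)
  have hmain : ∀ t, (refusals (playHist k SA SB T t) p : ℝ) * (2 * g) ≤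
      ∑ s ∈ Finset.range t, f s := by
    intro t
    induction t with
    | zero => simp [playHist, refusals]
    | succ t ih =>
      rw [playHist_succ, refusals_append, Finset.sum_range_succ]
      split_ifs with he
      · have h1 : 2 * g ≤ f t := by
          have hadd := pieceVal_add hδ hB hp p.2
          have e1 : roundCuts k SA SB T t = p.1 := by rw [← he]
          have e2 : roundChoice k SA SB T t = p.2 := by rw [← he]
          simp only [hf, e1, e2]
          have : pieceVal vB (altPiece k p.1 (!p.2)) ≤
            max (pieceVal vB (altPiece k p.1 true)) (pieceVal vB (altPiece k p.1 false)) := by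
            cases p.2
            · exact le_max_left _ _
            · exact le_max_right _ _
          linarith
        push_cast
        linarith
      · have := hf0 t
        push_cast
        linarith
  refine (hmain t).trans ?_
  unfold bobRegret
  exact Finset.sum_le_sum_of_subset_of_nonneg (Finset.range_mono ht) (fun i _ _ => hf0 i)

/-- Potential: capped number of refusals. -/
def potential {k : ℕ} (P : Finset ((Fin k → ℝ) × Bool)) (m : ℕ) (h : Hist k) : ℕ :=
  ∑ p ∈ P, min (refusals h p) m

lemma potential_le {k : ℕ} (P : Finset ((Fin k → ℝ) × Bool)) (m : ℕ) (h : Hist k) :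
    potential P m h ≤ P.card * m := by
  have := Finset.sum_le_card_nsmul P (fun p => min (refusals h p) m) m
    (fun p _ => min_le_right _ _)
  simpa [potential] using this

lemma potential_mono {k : ℕ} (P : Finset ((Fin k → ℝ) × Bool)) (m : ℕ) (h : Hist k)
    (e : (Fin k → ℝ) × Bool) : potential P m h ≤ potential P m (h ++ [e]) := by
  refine Finset.sum_le_sum fun p _ => ?_
  rw [refusals_append]
  exact min_le_min_right _ (Nat.le_add_right _ _)

lemma potential_lt {k : ℕ} (P : Finset ((Fin k → ℝ) × Bool)) (m : ℕ) (h : Hist k)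
    (e : (Fin k → ℝ) × Bool) (he : e ∈ alive P m h) :
    potential P m h + 1 ≤ potential P m (h ++ [e]) := by
  have he' := Finset.mem_filter.1 he
  apply Nat.succ_le_of_lt
  unfold potential
  refine Finset.sum_lt_sum (fun p _ => ?_) ⟨e, he'.1, ?_⟩
  · rw [refusals_append]
    exact min_le_min_right _ (Nat.le_add_right _ _)
  · rw [refusals_append, if_pos rfl]
    have := he'.2
    omega

/-- The main regret bound for given parameters. -/
lemma descStrategy_regret {δ Δ : ℝ} (hδ : 0 < δ) (hδΔ : δ ≤ Δ) {k : ℕ} (hk : 1 ≤ k)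
    {vA vB : ℝ → ℝ} (hA : IsValueDensity δ Δ vA) (hB : IsValueDensity δ Δ vB)
    (SB : BobStrategy k) (T : ℕ) (hn : 1 ≤ resol T)
    (K : ℝ) (hK : K = (k+1) * (Δ * ((2 * (k+1) * Δ + 1) / δ)) + 2 * (k+1) * Δ)
    (hreg : bobRegret k vB (descStrategy k vA) SB T < budget k T * (2 * (1 / (resol T : ℝ)))) :
    aliceRegret k vA vB (descStrategy k vA) SB T ≤
      T * (K / resol T) + ((gridCands k (resol T)).card * budget k T : ℕ) := by
  set n := resol T with hndef
  set m := budget k T with hmdef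
  set P := gridCands k n with hP
  set SA := descStrategy k vA with hSAdef
  have hSA : AliceValid k SA := descStrategy_valid k vA
  have hn0 : (0:ℝ) < n := by exact_mod_cast hn
  have hΔ : 0 < Δ := hδ.trans_le hδΔ
  have hK0 : 0 ≤ K / n := by rw [hK]; positivity
  have hu1 : stackelbergValue k vA vB ≤ 1 := by
    refine Real.sSup_le ?_ zero_le_one
    rintro u ⟨c, b, hc, -, rfl⟩
    have := pieceVal_add hδ hA hc b
    have := pieceVal_nonneg hδ hA hc (!b)
    linarith
  have hround : ∀ t, t ≤ T → stackelbergValue k vA vB ≤ pieceVal vA (altPiece k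
      (bestAlive vA P m (playHist k SA SB T t)).1 (bestAlive vA P m (playHist k SA SB T t)).2)
       + K / n ∧ ((alive P m (playHist k SA SB T t)).Nonempty ∨ stackelbergValue k vA vB ≤ K / n) := by
    intro t ht
    have hgood : ∀ p ∈ P, 1 / 2 + 1 / (n:ℝ) ≤ pieceVal vB (altPiece k p.1 (!p.2)) →
        p ∈ alive P m (playHist k SA SB T t) := by
      intro p hp hpB
      refine Finset.mem_filter.2 ⟨hp, ?_⟩
      by_contra hcon
      have h1 := refusals_cost hδ hB hSA SB T (gridCands_valid hp) hpB ht
      have h2 : (m:ℝ) ≤ refusals (playHist k SA SB T t) p := by exact_mod_cast not_lt.1 hcon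
      have h3 : (m:ℝ) * (2 * (1 / (n:ℝ))) ≤
          refusals (playHist k SA SB T t) p * (2 * (1 / (n:ℝ))) := by gcongr
      linarith
    have hbv := pieceVal_nonneg hδ hA (bestAlive_valid vA n m (playHist k SA SB T t))
      (bestAlive vA P m (playHist k SA SB T t)).2
    constructor
    · refine Real.sSup_le ?_ (by positivity)
      rintro u ⟨c, b, hc, hb, rfl⟩
      by_cases hu : pieceVal vA (altPiece k c b) ≤ K / n
      · linarith
      · obtain ⟨p, hp, hpB, hpA⟩ := exists_good hδ hδΔ hk hn hA hB hc b hb K hK (not_le.1 hu)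
        have hal := hgood p hp hpB
        have := (bestAlive_spec vA P m _ ⟨p, hal⟩).2 p hal
        linarith
    · by_contra! hcon
      apply hcon.2.not_ge
      refine Real.sSup_le ?_ hK0
      rintro u ⟨c, b, hc, hb, rfl⟩
      by_contra! hu
      obtain ⟨p, hp, hpB, hpA⟩ := exists_good hδ hδΔ hk hn hA hB hc b hb K hK hu
      have hal := hgood p hp hpB
      rw [hcon.1] at hal
      simp at hal
  have hmain : ∀ t, t ≤ T → ∑ s ∈ Finset.range t, (stackelbergValue k vA vB -
      pieceVal vA (altPiece k (roundCuts k SA SB T s) (!(roundChoice k SA SB T s)))) ≤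
      t * (K / n) + (potential P m (playHist k SA SB T t) : ℝ) := by
    intro t
    induction t with
    | zero => intro _; simp
    | succ t ih =>
      intro ht
      have ih := ih (by omega)
      obtain ⟨hr1, hr2⟩ := hround t (by omega)
      rw [Finset.sum_range_succ, playHist_succ]
      set h := playHist k SA SB T t with hh
      set q := bestAlive vA P m h with hq
      have hcuts : roundCuts k SA SB T t = q.1 := rfl
      have hqv : ValidCuts k q.1 := bestAlive_valid vA n m h
      have hnn := pieceVal_nonneg hδ hA hqv (!(roundChoice k SA SB T t))
      rw [hcuts]
      have hpm : (potential P m h : ℝ) ≤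
          potential P m (h ++ [(q.1, roundChoice k SA SB T t)]) := by
        exact_mod_cast potential_mono P m h _
      push_cast
      by_cases hch : roundChoice k SA SB T t = q.2
      · rcases hr2 with hne | hsmall
        · have hal := (bestAlive_spec vA P m h hne).1
          rw [← hq] at hal
          have hlt : (potential P m h : ℝ) + 1 ≤ potential P m (h ++ [q]) := by
            exact_mod_cast potential_lt P m h _ hal
          have e : (q.1, roundChoice k SA SB T t) = q := by rw [hch]
          rw [e]
          linarith
        · linarith
      · have e : (!(roundChoice k SA SB T t)) = q.2 := by
          cases h1 : roundChoice k SA SB T t <;> cases h2 : q.2 <;> simp_all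
        rw [e]
        linarith
  have h1 := hmain T le_rfl
  have h2 : (potential P m (playHist k SA SB T T) : ℝ) ≤ ((P.card * m : ℕ) : ℝ) := by
    exact_mod_cast potential_le P m _
  unfold aliceRegret
  linarith

/-- Eventual inequalities. -/
lemma eventual_bounds (k : ℕ) (α c : ℝ) (hα : α < 1) (hc : 0 < c) :
    ∃ T₀ : ℕ, ∀ T : ℕ, T₀ ≤ T → 1 ≤ Real.log T ∧
      c * (T:ℝ) ^ α * (3 * Real.log T) ^ (k+2) < T ∧ (3 * Real.log T) ^ (k+1) ≤ T := by
  have h1 := (isLittleO_log_rpow_rpow_atTop ((k+2 : ℕ) : ℝ) (sub_pos.2 hα)).bound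
    (c := 1 / (2 * c * 3 ^ (k+2))) (by positivity)
  have h2 := (Real.isLittleO_pow_log_id_atTop (n := k+1)).bound
    (c := 1 / 3 ^ (k+1)) (by positivity)
  have h3 := Real.tendsto_log_atTop.eventually_ge_atTop 1
  have h4 := Filter.eventually_gt_atTop (0:ℝ)
  have hall := tendsto_natCast_atTop_atTop (R := ℝ) |>.eventually
    (h1.and (h2.and (h3.and h4)))
  obtain ⟨T₀, hT₀⟩ := Filter.eventually_atTop.1 hall
  refine ⟨T₀, fun T hT => ?_⟩
  obtain ⟨a1, a2, a3, a4⟩ := hT₀ T hT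
  set L := Real.log T
  have hL : 0 < L := by linarith
  refine ⟨a3, ?_, ?_⟩
  · rw [Real.rpow_natCast, Real.norm_of_nonneg (by positivity), Real.norm_of_nonneg (by positivity)] at a1
    have hsplit : (T:ℝ) ^ α * (T:ℝ) ^ (1 - α) = T := by
      rw [← Real.rpow_add a4]; simp
    calc c * (T:ℝ) ^ α * (3 * L) ^ (k+2) = c * (T:ℝ) ^ α * 3 ^ (k+2) * L ^ (k+2) := by
          rw [mul_pow]; ring
      _ ≤ c * (T:ℝ) ^ α * 3 ^ (k+2) * (1 / (2 * c * 3 ^ (k+2)) * (T:ℝ) ^ (1 - α)) := by gcongr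
      _ = ((T:ℝ) ^ α * (T:ℝ) ^ (1 - α)) / 2 := by field_simp
      _ = T / 2 := by rw [hsplit]
      _ < T := by linarith
  · rw [Real.norm_of_nonneg (by positivity), id, Real.norm_of_nonneg a4.le] at a2
    calc (3 * L) ^ (k+1) = 3 ^ (k+1) * L ^ (k+1) := mul_pow _ _ _
      _ ≤ 3 ^ (k+1) * (1 / 3 ^ (k+1) * T) := by gcongr
      _ = T := by field_simp

/-- `k ≥ 3` cuts, non-myopic Bob with private learning rate, upper bound:
for every Alice value density there is a deterministic Alice strategy, independent of `α`
and `c`, such that for every `α < 1` and `c > 0` there are `C > 0` and `T₀` with: against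
every Bob value density and every Bob strategy guaranteeing regret at most `c·T'^α` for all
horizons, Alice's Stackelberg regret over any horizon `T ≥ T₀` is at most
`C·T·k^{3/4}/log T`. -/
theorem k_cut_private_rate_upper (δ Δ : ℝ) (hδ : 0 < δ) (hδΔ : δ ≤ Δ)
    (k : ℕ) (hk : 3 ≤ k) :
    ∀ vA : ℝ → ℝ, IsValueDensity δ Δ vA →
      ∃ SA : AliceStrategy k, AliceValid k SA ∧
        ∀ α : ℝ, α < 1 →
          ∀ c : ℝ, 0 < c →
            ∃ (C : ℝ) (T₀ : ℕ), 0 < C ∧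
              ∀ vB : ℝ → ℝ, IsValueDensity δ Δ vB →
                ∀ SB : BobStrategy k,
                  BobGuarantees k vB SB (fun T' => c * (T' : ℝ) ^ α) →
                  ∀ T : ℕ, T₀ ≤ T →
                    aliceRegret k vA vB SA SB T ≤
                      C * (T : ℝ) * (k : ℝ) ^ ((3 : ℝ) / 4) / Real.log T := by
  intro vA hA
  refine ⟨descStrategy k vA, descStrategy_valid k vA, fun α hα c hc => ?_⟩
  obtain ⟨T₀, hT₀⟩ := eventual_bounds k α c hα hc
  have hΔ : 0 < Δ := hδ.trans_le hδΔ
  obtain ⟨K, hK⟩ : ∃ K : ℝ,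
    K = (k+1) * (Δ * ((2 * (k+1) * Δ + 1) / δ)) + 2 * (k+1) * Δ := ⟨_, rfl⟩
  have hK0 : 0 ≤ K := by rw [hK]; positivity
  refine ⟨K + 4, T₀, by positivity, fun vB hB SB hSB T hT => ?_⟩
  obtain ⟨hL1, hb1, hb2⟩ := hT₀ T hT
  have hbob := hSB (descStrategy k vA) T
  simp only at hbob
  set L := Real.log T with hLdef
  have hL : 0 < L := by linarith
  have hnL : L ≤ (resol T : ℝ) := Nat.le_ceil _
  have hn0 : (0:ℝ) < resol T := by linarith
  have hn1 : 1 ≤ resol T := by exact_mod_cast hn0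
  have hn3 : (resol T : ℝ) + 1 ≤ 3 * L := by
    have : (resol T : ℝ) < L + 1 := Nat.ceil_lt_add_one hL.le
    linarith
  have hm1 : (T:ℝ) / ((resol T : ℝ) + 1) ^ (k+1) < budget k T := by
    unfold budget; push_cast; exact Nat.lt_floor_add_one _
  have hm2 : (budget k T : ℝ) ≤ (T:ℝ) / ((resol T : ℝ) + 1) ^ (k+1) + 1 := by
    unfold budget; push_cast
    have := Nat.floor_le (a := (T:ℝ) / ((resol T : ℝ) + 1) ^ (k+1)) (by positivity)
    linarith
  have hcard : ((gridCands k (resol T)).card : ℝ) ≤ 2 * ((resol T : ℝ) + 1) ^ k := by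
    exact_mod_cast gridCands_card k (resol T)
  generalize hn : (resol T : ℝ) = n at *
  have hreg : bobRegret k vB (descStrategy k vA) SB T < budget k T * (2 * (1 / (resol T : ℝ))) := by
    rw [hn]
    have h1 : (T:ℝ) / (n + 1) ^ (k+1) * (1 / (n + 1)) ≤ budget k T * (2 * (1 / n)) := by
      have : 1 / (n + 1) ≤ 2 * (1 / n) := by
        have : 1 / (n + 1) ≤ 1 / n := by gcongr; linarith
        have : 0 ≤ 1 / n := by positivity
        linarith
      gcongr
    have h2 : (T:ℝ) / (3 * L) ^ (k+2) ≤ (T:ℝ) / (n + 1) ^ (k+1) * (1 / (n + 1)) := by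
      have : (T:ℝ) / (n + 1) ^ (k+1) * (1 / (n + 1)) = T / (n+1) ^ (k+2) := by
        rw [pow_succ (n+1) (k+1)]; field_simp
      rw [this]; gcongr
    have h3 : c * (T:ℝ) ^ α < (T:ℝ) / (3 * L) ^ (k+2) := by
      rw [lt_div_iff₀ (by positivity)]; exact hb1
    linarith
  have hmain := descStrategy_regret hδ hδΔ (by omega) hA hB SB T hn1 K hK hreg
  rw [hn] at hmain
  push_cast at hmain
  have hT0 : (0:ℝ) ≤ T := by positivity
  have h1 : (T:ℝ) * (K / n) ≤ K * (T / L) := by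
    calc (T:ℝ) * (K / n) ≤ T * (K / L) := by gcongr
      _ = _ := by ring
  have h2 : ((gridCands k (resol T)).card : ℝ) * budget k T ≤ 4 * (T / L) := by
    have hp : 0 < n + 1 := by linarith
    calc ((gridCands k (resol T)).card : ℝ) * budget k T
        ≤ (2 * (n + 1) ^ k) * (T / (n + 1) ^ (k+1) + 1) := by gcongr
      _ = (2 * T + 2 * (n+1) ^ (k+1)) / (n + 1) := by
          rw [pow_succ]; field_simp
      _ ≤ (2 * T + 2 * (3 * L) ^ (k+1)) / (n + 1) := by gcongr
      _ ≤ (2 * T + 2 * T) / (n + 1) := by gcongr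
      _ ≤ (2 * T + 2 * T) / L := by gcongr; linarith
      _ = _ := by ring
  have hk1 : (1:ℝ) ≤ (k:ℝ) ^ ((3:ℝ)/4) := by
    apply Real.one_le_rpow
    · exact_mod_cast (by omega : 1 ≤ k)
    · norm_num
  calc aliceRegret k vA vB (descStrategy k vA) SB T ≤ (K + 4) * (T / L) := by linarith
    _ ≤ (K + 4) * (T / L) * (k:ℝ) ^ ((3:ℝ)/4) := le_mul_of_one_le_right (by positivity) hk1
    _ = _ := by ring

end
end

section
/- For every integer k ≥ 2, every z ∈ [5/6, 11/12], every w ∈ (0, 1/48], and every Lebesgue-measurable set S ⊆ [0,1]: |∫_S σ₀^k(x) dx − ∫_S σ_{w;z}^k(x) dx| ≤ 2w/(3k). -/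
open MeasureTheory Set

noncomputable section

attribute [local instance] Classical.propDecidable

/-- The common length of the high-value intervals: `ℓ^k = 1/(3(⌊k/2⌋ + 1/2))`. -/
def ell (k : ℕ) : ℝ := 1 / (3 * ((k / 2 : ℕ) + 1 / 2))

/-- The number of high-value intervals: `⌊k/2⌋ + 1`. -/
def nHigh (k : ℕ) : ℕ := k / 2 + 1

/-- The number of low-value intervals: `⌈k/2⌉`. -/
def nLow (k : ℕ) : ℕ := (k + 1) / 2

/-- The common length of the low-value intervals. -/
def lowLen (k : ℕ) : ℝ := (1 - nHigh k * ell k) / nLow k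

/-- Left endpoint of the `j`-th interval (0-indexed; the intervals alternate
high, low, high, …, starting with a high-value interval). -/
def bd (k : ℕ) (j : ℕ) : ℝ := ((j + 1) / 2 : ℕ) * ell k + (j / 2 : ℕ) * lowLen k

/-- The union `H^k` of the high-value intervals (even-indexed). -/
def Hset (k : ℕ) : Set ℝ :=
  ⋃ j ∈ Finset.range (k + 1),
    if j % 2 = 0 then Set.Icc (bd k j) (bd k (j + 1)) else ∅

/-- The union `L^k` of the (interiors of the) low-value intervals (odd-indexed). -/
def Lset (k : ℕ) : Set ℝ :=
  ⋃ j ∈ Finset.range (k + 1),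
    if j % 2 = 1 then Set.Ioo (bd k j) (bd k (j + 1)) else ∅

/-- The density of the low-value region: `(1 - (3/2)μ(H^k))/μ(L^k)`. -/
def lowDens (k : ℕ) : ℝ :=
  (1 - 3 / 2 * (volume (Hset k)).toReal) / (volume (Lset k)).toReal

/-- The unspiked value density `σ₀^k`: `3/2` on `H^k`, `lowDens k` elsewhere. -/
def sigma0 (k : ℕ) : ℝ → ℝ := fun x => if x ∈ Hset k then 3 / 2 else lowDens k

/-- The spiked value density `σ_{w;z}^k`: equal to `2` for `x/ℓ^k ∈ (z-w, z]`, to `1` for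
`x/ℓ^k ∈ (z, z+w)`, and to `σ₀^k(x)` otherwise. -/
def sigmaSpike (k : ℕ) (w z : ℝ) : ℝ → ℝ := fun x =>
  if x / ell k ∈ Set.Ioc (z - w) z then 2
  else if x / ell k ∈ Set.Ioo z (z + w) then 1
  else sigma0 k x

theorem aux_ell_pos (k : ℕ) : 0 < ell k := by unfold ell; positivity

theorem aux_Hset_meas (k : ℕ) : MeasurableSet (Hset k) := by
  unfold Hset
  refine Finset.measurableSet_biUnion _ fun j _ => ?_
  split_ifs
  · exact measurableSet_Icc
  · exact MeasurableSet.empty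

theorem aux_sigma0_meas (k : ℕ) : Measurable (sigma0 k) :=
  Measurable.ite (aux_Hset_meas k) measurable_const measurable_const

theorem aux_spike_meas (k : ℕ) (w z : ℝ) : Measurable (sigmaSpike k w z) := by
  have hd : Measurable fun x : ℝ => x / ell k := measurable_id.div_const _
  exact Measurable.ite (hd measurableSet_Ioc) measurable_const
    (Measurable.ite (hd measurableSet_Ioo) measurable_const (aux_sigma0_meas k))

theorem aux_sigma0_bd (k : ℕ) (x : ℝ) : ‖sigma0 k x‖ ≤ 2 + |lowDens k| := by
  unfold sigma0
  split_ifs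
  · rw [Real.norm_eq_abs, abs_of_pos (by norm_num)]
    linarith [abs_nonneg (lowDens k)]
  · rw [Real.norm_eq_abs]; linarith

theorem aux_spike_bd (k : ℕ) (w z x : ℝ) : ‖sigmaSpike k w z x‖ ≤ 2 + |lowDens k| := by
  unfold sigmaSpike
  split_ifs
  · rw [Real.norm_eq_abs, abs_of_pos (by norm_num)]
    linarith [abs_nonneg (lowDens k)]
  · rw [Real.norm_eq_abs, abs_of_pos (by norm_num)]
    linarith [abs_nonneg (lowDens k)]
  · exact aux_sigma0_bd k x

theorem aux_sigma0_first (k : ℕ) (x : ℝ) (h0 : 0 ≤ x) (h1 : x ≤ ell k) :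
    sigma0 k x = 3 / 2 := by
  have : x ∈ Hset k := by
    unfold Hset
    refine Set.mem_biUnion (x := 0) (by simp) ?_
    simp [bd, h0, h1]
  simp [sigma0, this]

/-- spike similarity: for every `k ≥ 2`, `z ∈ [5/6, 11/12]`,
`w ∈ (0, 1/48]` and every Lebesgue-measurable `S ⊆ [0,1]`,
`|∫_S σ₀^k − ∫_S σ_{w;z}^k| ≤ 2w/(3k)`. -/
theorem spiked_similarity (k : ℕ) (hk : 2 ≤ k)
    (z : ℝ) (hz : z ∈ Set.Icc (5/6 : ℝ) (11/12))
    (w : ℝ) (hw : w ∈ Set.Ioc (0 : ℝ) (1/48))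
    (S : Set ℝ) (hSmeas : MeasurableSet S) (hSsub : S ⊆ Set.Icc 0 1) :
    |(∫ x in S, sigma0 k x) - ∫ x in S, sigmaSpike k w z x| ≤ 2 * w / (3 * k) := by
  obtain ⟨hz1, hz2⟩ := hz
  obtain ⟨hw1, hw2⟩ := hw
  have hl := aux_ell_pos k
  have hSfin : volume S < ⊤ := lt_of_le_of_lt (measure_mono hSsub) (by simp)
  have i0 : IntegrableOn (sigma0 k) S :=
    Measure.integrableOn_of_bounded hSfin.ne (aux_sigma0_meas k).aestronglyMeasurable
      (Filter.Eventually.of_forall (aux_sigma0_bd k))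
  have i1 : IntegrableOn (sigmaSpike k w z) S :=
    Measure.integrableOn_of_bounded hSfin.ne (aux_spike_meas k w z).aestronglyMeasurable
      (Filter.Eventually.of_forall (aux_spike_bd k w z))
  rw [← integral_sub i0 i1]
  -- the difference vanishes outside `T` and is at most `1/2` in absolute value
  set T : Set ℝ := Set.Ioo ((z - w) * ell k) ((z + w) * ell k) with hT
  have hout : ∀ x, x ∉ T → sigma0 k x - sigmaSpike k w z x = 0 := by
    intro x hx
    have hA : x / ell k ∉ Set.Ioc (z - w) z := by
      rintro ⟨h1, h2⟩
      rw [lt_div_iff₀ hl] at h1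
      rw [div_le_iff₀ hl] at h2
      exact hx ⟨h1, by nlinarith⟩
    have hB : x / ell k ∉ Set.Ioo z (z + w) := by
      rintro ⟨h1, h2⟩
      rw [lt_div_iff₀ hl] at h1
      rw [div_lt_iff₀ hl] at h2
      exact hx ⟨by nlinarith, h2⟩
    simp [sigmaSpike, hA, hB]
  have hin : ∀ x ∈ T, ‖sigma0 k x - sigmaSpike k w z x‖ ≤ 1 / 2 := by
    rintro x ⟨h1, h2⟩
    have h0 := aux_sigma0_first k x (by nlinarith) (by nlinarith)
    unfold sigmaSpike
    rw [h0, Real.norm_eq_abs]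
    split_ifs <;> norm_num [abs_of_pos, abs_of_neg]
  have hTm : MeasurableSet T := measurableSet_Ioo
  have hres : ∫ x in S, (sigma0 k x - sigmaSpike k w z x)
      = ∫ x in S ∩ T, (sigma0 k x - sigmaSpike k w z x) :=
    (setIntegral_eq_of_subset_of_forall_sdiff_eq_zero hSmeas Set.inter_subset_left
      (fun x hx => hout x fun h => hx.2 ⟨hx.1, h⟩))
  have hTfin : volume T < ⊤ := by simp [hT]
  have hfin : volume (S ∩ T) < ⊤ := lt_of_le_of_lt (measure_mono Set.inter_subset_left) hSfin
  have hb := norm_setIntegral_le_of_norm_le_const (μ := volume) hfin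
    (fun x (hx : x ∈ S ∩ T) => hin x hx.2)
  rw [hres, ← Real.norm_eq_abs]
  refine hb.trans ?_
  have hTv : volume.real T = 2 * w * ell k := by
    rw [hT, Real.volume_real_Ioo_of_le (by nlinarith)]; ring
  have hm : volume.real (S ∩ T) ≤ 2 * w * ell k := by
    rw [← hTv]; exact measureReal_mono Set.inter_subset_right hTfin.ne
  have hk0 : (0 : ℝ) < k := by exact_mod_cast (by omega : 0 < k)
  have hkk : (k : ℝ) ≤ 2 * ((k / 2 : ℕ) : ℝ) + 1 := by
    exact_mod_cast (by omega : k ≤ 2 * (k / 2) + 1)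
  have hle : ell k ≤ 2 / (3 * k) := by
    unfold ell
    rw [div_le_div_iff₀ (by positivity) (by positivity)]
    linarith
  calc 1 / 2 * volume.real (S ∩ T) ≤ w * ell k := by linarith
    _ ≤ w * (2 / (3 * k)) := by gcongr
    _ = 2 * w / (3 * k) := by ring

end
end
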